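/- Let σ > 0, r, q ∈ ℝ, K > 0, T > 0. The Black–Scholes European put price function P(s,t) = K·e^{-r t}·N(−d₂(s,K,t)) − s·e^{-q t}·N(−d₁(s,K,t)) satisfies the forward Black–Scholes partial differential equation ∂u/∂t − (1/2)σ²s² ∂²u/∂s² − (r−q)s ∂u/∂s + r u = 0 at every point (s,t) with s > 0 and 0 < t ≤ T. -/

import Mathlib

open Real Set

/-- The standard normal cumulative distribution function. -/
noncomputable def stdNormalCDF (x : ℝ) : ℝ :=
  ∫ y in Set.Iic x, (Real.sqrt (2 * Real.pi))⁻¹ * Real.exp (-(y ^ 2) / 2)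

/-- d₁(s,K,t) in the Black–Scholes formula. -/
noncomputable def d1 (σ r q s K t : ℝ) : ℝ :=
  (Real.log (s / K) + (r - q + σ ^ 2 / 2) * t) / (σ * Real.sqrt t)

/-- d₂(s,K,t) in the Black–Scholes formula. -/
noncomputable def d2 (σ r q s K t : ℝ) : ℝ :=
  d1 σ r q s K t - σ * Real.sqrt t

/-- The Black–Scholes European call price. -/
noncomputable def callPrice (σ r q K s t : ℝ) : ℝ :=
  s * Real.exp (-q * t) * stdNormalCDF (d1 σ r q s K t)
    - K * Real.exp (-r * t) * stdNormalCDF (d2 σ r q s K t)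

/-- The Black–Scholes European put price. -/
noncomputable def putPrice (σ r q K s t : ℝ) : ℝ :=
  K * Real.exp (-r * t) * stdNormalCDF (-(d2 σ r q s K t))
    - s * Real.exp (-q * t) * stdNormalCDF (-(d1 σ r q s K t))

/-- The standard normal probability density function. -/
noncomputable def stdNormalPDF (x : ℝ) : ℝ :=
  (Real.sqrt (2 * Real.pi))⁻¹ * Real.exp (-(x ^ 2) / 2)

/-!
With `φ` the standard normal density, the identity `K e^{-rt} φ(d₂) = s e^{-qt} φ(d₁)` makes the
derivative of the put price independent of that of `d₁`: along any path only the derivative of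
`d₁ - d₂ = σ√t` survives. Hence `∂P/∂s = -e^{-qt} N(-d₁)`, while `∂P/∂t` has the single density
term `s e^{-qt} φ(d₁) σ / (2√t)`, which is exactly `½ σ² s² ∂²P/∂s²`.
-/

open MeasureTheory ProbabilityTheory Topology

theorem hasDerivAt_integral_Iic {E : Type*} [NormedAddCommGroup E] [NormedSpace ℝ E]
    [CompleteSpace E] {f : ℝ → E} {b x : ℝ} (hf : IntegrableOn f (Iic b)) (hx : x < b)
    (hfx : ContinuousAt f x) : HasDerivAt (fun u => ∫ y in Iic u, f y) (f x) x := by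
  have integrableOn_Iic : ∀ {u}, u < b → IntegrableOn f (Iic u) := fun hu =>
    hf.mono_set (Iic_subset_Iic.2 hu.le)
  have ftc : HasDerivAt (fun u => ∫ y in x..u, f y) (f x) x :=
    intervalIntegral.integral_hasDerivAt_right IntervalIntegrable.refl
      (AEStronglyMeasurable.stronglyMeasurableAtFilter_of_mem hf.aestronglyMeasurable
        (Iic_mem_nhds hx)) hfx
  refine (ftc.const_add (∫ y in Iic x, f y)).congr_of_eventuallyEq ?_
  filter_upwards [Iio_mem_nhds hx] with u hu
  rw [← intervalIntegral.integral_Iic_sub_Iic (integrableOn_Iic hx) (integrableOn_Iic hu),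
    add_sub_cancel]

theorem stdNormalPDF_eq_gaussianPDFReal : stdNormalPDF = gaussianPDFReal 0 1 := by
  ext x
  simp [stdNormalPDF, gaussianPDFReal]

theorem continuous_stdNormalPDF : Continuous stdNormalPDF := by
  unfold stdNormalPDF
  fun_prop

theorem integrable_stdNormalPDF : Integrable stdNormalPDF :=
  stdNormalPDF_eq_gaussianPDFReal ▸ integrable_gaussianPDFReal 0 1

theorem stdNormalPDF_neg (x : ℝ) : stdNormalPDF (-x) = stdNormalPDF x := by
  simp only [stdNormalPDF, neg_sq]

theorem stdNormalPDF_sub (x v : ℝ) :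
    stdNormalPDF (x - v) = exp (x * v - v ^ 2 / 2) * stdNormalPDF x := by
  have exponent : -(x - v) ^ 2 / 2 = (x * v - v ^ 2 / 2) + -x ^ 2 / 2 := by ring
  rw [stdNormalPDF, stdNormalPDF, exponent, exp_add]
  ring

theorem hasDerivAt_stdNormalCDF (x : ℝ) : HasDerivAt stdNormalCDF (stdNormalPDF x) x :=
  hasDerivAt_integral_Iic integrable_stdNormalPDF.integrableOn (lt_add_one x)
    continuous_stdNormalPDF.continuousAt

theorem hasDerivAt_stdNormalCDF_neg_comp {f : ℝ → ℝ} {f' x : ℝ} (hf : HasDerivAt f f' x) :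
    HasDerivAt (fun y => stdNormalCDF (-f y)) (-(stdNormalPDF (f x) * f')) x := by
  have chain := (hasDerivAt_stdNormalCDF (-f x)).comp x hf.fun_neg
  rwa [stdNormalPDF_neg, mul_neg] at chain

/-- The balance condition `hbal` makes the contributions of the derivative of `f` cancel. -/
theorem hasDerivAt_mul_stdNormalCDF_neg_sub_of_balance {a b f v : ℝ → ℝ} {a' b' v' x : ℝ}
    (ha : HasDerivAt a a' x) (hb : HasDerivAt b b' x) (hf : DifferentiableAt ℝ f x)
    (hv : HasDerivAt v v' x)
    (hbal : a x * stdNormalPDF (f x - v x) = b x * stdNormalPDF (f x)) :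
    HasDerivAt (fun y => a y * stdNormalCDF (-(f y - v y)) - b y * stdNormalCDF (-f y))
      (a' * stdNormalCDF (-(f x - v x)) - b' * stdNormalCDF (-f x)
        + b x * stdNormalPDF (f x) * v') x := by
  have hN₂ := hasDerivAt_stdNormalCDF_neg_comp (hf.hasDerivAt.fun_sub hv)
  have hN₁ := hasDerivAt_stdNormalCDF_neg_comp hf.hasDerivAt
  refine ((ha.fun_mul hN₂).fun_sub (hb.fun_mul hN₁)).congr_deriv ?_
  linear_combination (v' - deriv f x) * hbal

/-- The delta `∂P/∂s` of the put. -/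
noncomputable def putDelta (σ r q K s t : ℝ) : ℝ :=
  -(exp (-q * t) * stdNormalCDF (-d1 σ r q s K t))

/-- The gamma `∂²P/∂s²` of the put. -/
noncomputable def putGamma (σ r q K s t : ℝ) : ℝ :=
  exp (-q * t) * stdNormalPDF (d1 σ r q s K t) / (s * (σ * √t))

/-- The theta `∂P/∂t` of the put, where `t` is the time to maturity; the derivative in calendar
time has the opposite sign. -/
noncomputable def putTheta (σ r q K s t : ℝ) : ℝ :=
  q * (s * exp (-q * t) * stdNormalCDF (-d1 σ r q s K t))
    - r * (K * exp (-r * t) * stdNormalCDF (-d2 σ r q s K t))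
    + s * exp (-q * t) * stdNormalPDF (d1 σ r q s K t) * (σ / (2 * √t))

section Greeks

variable {σ r q K s t : ℝ}

theorem d1_mul_vol_sub_half_sq (hσ : σ ≠ 0) (ht : 0 < t) :
    d1 σ r q s K t * (σ * √t) - (σ * √t) ^ 2 / 2 = log (s / K) + (r - q) * t := by
  have hvol : σ * √t ≠ 0 := mul_ne_zero hσ (sqrt_pos.2 ht).ne'
  rw [d1, div_mul_cancel₀ _ hvol, mul_pow, sq_sqrt ht.le]
  ring

theorem strike_mul_exp_mul_stdNormalPDF_d2 (hσ : σ ≠ 0) (hsK : 0 < s / K) (ht : 0 < t) :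
    K * exp (-r * t) * stdNormalPDF (d2 σ r q s K t)
      = s * exp (-q * t) * stdNormalPDF (d1 σ r q s K t) := by
  have hK : K ≠ 0 := (div_ne_zero_iff.1 hsK.ne').2
  have hexp : exp (-r * t) * exp ((r - q) * t) = exp (-q * t) := by
    rw [← exp_add]
    ring_nf
  calc K * exp (-r * t) * stdNormalPDF (d2 σ r q s K t)
      = K * exp (-r * t) * (s / K * exp ((r - q) * t) * stdNormalPDF (d1 σ r q s K t)) := by
        rw [d2, stdNormalPDF_sub, d1_mul_vol_sub_half_sq hσ ht, exp_add, exp_log hsK]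
    _ = K * (s / K) * (exp (-r * t) * exp ((r - q) * t)) * stdNormalPDF (d1 σ r q s K t) := by
        ring
    _ = s * exp (-q * t) * stdNormalPDF (d1 σ r q s K t) := by
        rw [mul_div_cancel₀ s hK, hexp]

theorem hasDerivAt_d1_spot (hs : s ≠ 0) (hK : K ≠ 0) :
    HasDerivAt (fun x => d1 σ r q x K t) (1 / (s * (σ * √t))) s := by
  have hlog := ((hasDerivAt_id s).div_const K).log (div_ne_zero hs hK)
  refine ((hlog.add_const ((r - q + σ ^ 2 / 2) * t)).div_const (σ * √t)).congr_deriv ?_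
  rw [id, div_div_div_cancel_right₀ hK, div_div]

theorem differentiableAt_d1_time (hσ : σ ≠ 0) (ht : 0 < t) :
    DifferentiableAt ℝ (fun τ => d1 σ r q s K τ) t := by
  have hvol : σ * √t ≠ 0 := mul_ne_zero hσ (sqrt_pos.2 ht).ne'
  unfold d1
  fun_prop (disch := first | assumption | exact ht.ne')

theorem hasDerivAt_putPrice_spot (hσ : σ ≠ 0) (hsK : 0 < s / K) (ht : 0 < t) :
    HasDerivAt (fun x => putPrice σ r q K x t) (putDelta σ r q K s t) s := by
  obtain ⟨hs, hK⟩ := div_ne_zero_iff.1 hsK.ne'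
  have hstrike := hasDerivAt_const s (K * exp (-r * t))
  have hspot := (hasDerivAt_id s).mul_const (exp (-q * t))
  have hd1 := (hasDerivAt_d1_spot (σ := σ) (r := r) (q := q) (t := t) hs hK).differentiableAt
  refine (hasDerivAt_mul_stdNormalCDF_neg_sub_of_balance hstrike hspot hd1
    (hasDerivAt_const s (σ * √t)) (strike_mul_exp_mul_stdNormalPDF_d2 hσ hsK ht)).congr_deriv ?_
  rw [putDelta]
  ring

theorem hasDerivAt_putDelta_spot (hs : s ≠ 0) (hK : K ≠ 0) :
    HasDerivAt (fun x => putDelta σ r q K x t) (putGamma σ r q K s t) s := by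
  have hN₁ := hasDerivAt_stdNormalCDF_neg_comp
    (hasDerivAt_d1_spot (σ := σ) (r := r) (q := q) (t := t) hs hK)
  refine (hN₁.const_mul (exp (-q * t))).fun_neg.congr_deriv ?_
  rw [putGamma]
  ring

theorem hasDerivAt_deriv_putPrice_spot (hσ : σ ≠ 0) (hsK : 0 < s / K) (ht : 0 < t) :
    HasDerivAt (fun x => deriv (fun y => putPrice σ r q K y t) x) (putGamma σ r q K s t) s := by
  obtain ⟨hs, hK⟩ := div_ne_zero_iff.1 hsK.ne'
  have moneyness_pos : ∀ᶠ x in 𝓝 s, 0 < x / K :=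
    (continuousAt_id.div_const K).eventually (lt_mem_nhds hsK)
  refine (hasDerivAt_putDelta_spot hs hK).congr_of_eventuallyEq ?_
  filter_upwards [moneyness_pos] with x hx
  exact (hasDerivAt_putPrice_spot hσ hx ht).deriv

theorem hasDerivAt_putPrice_time (hσ : σ ≠ 0) (hsK : 0 < s / K) (ht : 0 < t) :
    HasDerivAt (fun τ => putPrice σ r q K s τ) (putTheta σ r q K s t) t := by
  have hdisc (c ρ : ℝ) : HasDerivAt (fun τ => c * exp (-ρ * τ)) (-ρ * (c * exp (-ρ * t))) t :=
    (((hasDerivAt_id t).const_mul (-ρ)).exp.const_mul c).congr_deriv (by rw [id]; ring)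
  have hvol : HasDerivAt (fun τ => σ * √τ) (σ / (2 * √t)) t :=
    ((hasDerivAt_sqrt ht.ne').const_mul σ).congr_deriv (mul_one_div _ _)
  refine (hasDerivAt_mul_stdNormalCDF_neg_sub_of_balance (hdisc K r) (hdisc s q)
    (differentiableAt_d1_time hσ ht) hvol
    (strike_mul_exp_mul_stdNormalPDF_d2 hσ hsK ht)).congr_deriv ?_
  rw [putTheta, d2]
  ring

theorem putTheta_eq :
    putTheta σ r q K s t
      = 1 / 2 * σ ^ 2 * s ^ 2 * putGamma σ r q K s t + (r - q) * s * putDelta σ r q K s t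
        - r * putPrice σ r q K s t := by
  simp only [putTheta, putGamma, putDelta, putPrice]
  field_simp
  ring

/-- For `σ < 0` the function `putPrice σ r q K` is minus the call price with volatility `-σ`. -/
theorem blackScholes_put_solves_forward_pde_general (hσ : σ ≠ 0) (hsK : 0 < s / K) (ht : 0 < t) :
    deriv (fun τ => putPrice σ r q K s τ) t
      - (1 / 2) * σ ^ 2 * s ^ 2 *
          deriv (fun x => deriv (fun y => putPrice σ r q K y t) x) s
      - (r - q) * s * deriv (fun x => putPrice σ r q K x t) s
      + r * putPrice σ r q K s t = 0 := by
  rw [(hasDerivAt_putPrice_time hσ hsK ht).deriv, (hasDerivAt_deriv_putPrice_spot hσ hsK ht).deriv,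
    (hasDerivAt_putPrice_spot hσ hsK ht).deriv, putTheta_eq]
  ring

end Greeks

/-- The Black–Scholes put price satisfies the forward Black–Scholes PDE
    ∂u/∂t − (1/2)σ²s² ∂²u/∂s² − (r−q)s ∂u/∂s + r u = 0 for s > 0, 0 < t ≤ T. -/
theorem blackScholes_put_solves_forward_pde
    (σ r q K T : ℝ) (hσ : 0 < σ) (hK : 0 < K) (hT : 0 < T) :
    ∀ s t : ℝ, 0 < s → 0 < t → t ≤ T →
      deriv (fun τ => putPrice σ r q K s τ) t
        - (1 / 2) * σ ^ 2 * s ^ 2 *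
            deriv (fun x => deriv (fun y => putPrice σ r q K y t) x) s
        - (r - q) * s * deriv (fun x => putPrice σ r q K x t) s
        + r * putPrice σ r q K s t = 0 := by
  intro s t hs ht _
  exact blackScholes_put_solves_forward_pde_general hσ.ne' (div_pos hs hK) ht
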